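/- arXiv:1404.3127 — 2 statements merged into one kernel-verified Lean document; each statement's English description precedes it below -/
import Mathlib

section
/- Let p ∈ (0,1) and q = 1-p. Let f : ℝ → ℝ be smooth with every derivative f^{(k)} bounded and in L^p(ℝ). Then for every n ≥ 1, ‖f‖_∞ ≤ ‖f^{(n)}‖_∞^{q^n} · ∏_{k=1}^n ‖f^{(k)}‖_p^{p q^{k-1}}. -/
open Real MeasureTheory Filter Set

noncomputable def pNorm (p : ℝ) (f : ℝ → ℝ) : ℝ := (∫ x : ℝ, |f x| ^ p) ^ (1 / p)

noncomputable def supNorm (f : ℝ → ℝ) : ℝ := ⨆ x : ℝ, |f x|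

def MemLp' (p : ℝ) (f : ℝ → ℝ) : Prop := MeasureTheory.Integrable (fun x : ℝ => |f x| ^ p)

def BddFun (f : ℝ → ℝ) : Prop := ∃ C : ℝ, ∀ x, |f x| ≤ C

noncomputable def MNorm (p : ℝ) (M : ℕ → ℝ) (f : ℝ → ℝ) : ℝ :=
  ⨆ k : ℕ, pNorm p (iteratedDeriv k f) / M k

/-- The class `S`: smooth functions whose derivatives are all bounded and in `L^p`,
with finite Carleman–Sobolev quasi-norm, and `limsup ‖f^(k)‖_∞ ^ (q^k) ≤ 1`. -/
def MemS (p q : ℝ) (M : ℕ → ℝ) (f : ℝ → ℝ) : Prop :=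
  ContDiff ℝ (⊤ : ℕ∞) f ∧
  (∀ k, BddFun (iteratedDeriv k f) ∧ MemLp' p (iteratedDeriv k f)) ∧
  BddAbove (Set.range fun k : ℕ => pNorm p (iteratedDeriv k f) / M k) ∧
  Filter.limsup (fun k : ℕ => supNorm (iteratedDeriv k f) ^ (q ^ k)) Filter.atTop ≤ 1

/-- `μ_M = ∏_{k=1}^∞ M_k ^ (p q^(k-1))`, as a `tprod`. -/
noncomputable def muProd (p q : ℝ) (M : ℕ → ℝ) : ℝ := ∏' k : ℕ, M (k + 1) ^ (p * q ^ k)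

/-- Convergence of the product `μ_M`. -/
def MuFinite (p q : ℝ) (M : ℕ → ℝ) : Prop := Multipliable fun k : ℕ => M (k + 1) ^ (p * q ^ k)

/-!
Since `f ∈ L^p`, `|f|` takes arbitrarily small values, so the fundamental theorem of calculus gives
`‖f‖_∞ ≤ ∫ |f'|`. Splitting `|f'| = |f'|^(1-p) |f'|^p` yields the basic estimate
`‖f‖_∞ ≤ ‖f'‖_∞^(1-p) ‖f'‖_p^p`. Applying it to `f^(n)` and raising it to the power `(1-p)^n`
replaces the factor `‖f^(n)‖_∞^((1-p)^n)` by `‖f^(n+1)‖_∞^((1-p)^(n+1))` times the next factor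
of the product. The estimate also shows that `f^(n)` is bounded as soon as `f^(n+1)` is.
-/

section BoundedLp

variable {α E : Type*} [MeasurableSpace α] {μ : Measure α} [NormedAddCommGroup E] {p C : ℝ}
  {f : α → E}

lemma le_rpow_one_sub_mul_rpow {t : ℝ} (hp : 0 ≤ p) (hp1 : p ≤ 1) (ht : 0 ≤ t) (htC : t ≤ C) :
    t ≤ C ^ (1 - p) * t ^ p :=
  calc t = t ^ (1 - p) * t ^ p := by
        rw [← rpow_add_of_nonneg ht (sub_nonneg.2 hp1) hp, sub_add_cancel, rpow_one]
    _ ≤ C ^ (1 - p) * t ^ p := by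
        gcongr

lemma integrable_of_norm_le_of_integrable_norm_rpow (hp : 0 ≤ p) (hp1 : p ≤ 1)
    (hf : AEStronglyMeasurable f μ) (hC : ∀ᵐ x ∂μ, ‖f x‖ ≤ C)
    (hfp : Integrable (fun x => ‖f x‖ ^ p) μ) : Integrable f μ :=
  (hfp.const_mul (C ^ (1 - p))).mono' hf <|
    hC.mono fun _ => le_rpow_one_sub_mul_rpow hp hp1 (norm_nonneg _)

lemma integral_norm_le_rpow_one_sub_mul_integral_norm_rpow (hp : 0 ≤ p) (hp1 : p ≤ 1)
    (hC : ∀ᵐ x ∂μ, ‖f x‖ ≤ C) (hfp : Integrable (fun x => ‖f x‖ ^ p) μ) :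
    ∫ x, ‖f x‖ ∂μ ≤ C ^ (1 - p) * ∫ x, ‖f x‖ ^ p ∂μ := by
  rw [← integral_const_mul]
  exact integral_mono_of_nonneg (ae_of_all _ fun _ => norm_nonneg _) (hfp.const_mul _)
    (hC.mono fun _ => le_rpow_one_sub_mul_rpow hp hp1 (norm_nonneg _))

lemma exists_norm_lt_of_integrable_norm_rpow (hμ : μ univ = ⊤) (hp : 0 < p)
    (hfp : Integrable (fun x => ‖f x‖ ^ p) μ) {ε : ℝ} (hε : 0 < ε) : ∃ x, ‖f x‖ < ε := by
  by_contra! hge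
  have hall : {x | ε ^ p ≤ ‖‖f x‖ ^ p‖} = univ := eq_univ_of_forall fun x =>
    (rpow_le_rpow hε.le (hge x) hp.le).trans (le_norm_self _)
  have hfin := hfp.measure_norm_ge_lt_top (rpow_pos_of_pos hε p)
  rw [hall, hμ] at hfin
  exact hfin.false

end BoundedLp

section Deriv

variable {E : Type*} [NormedAddCommGroup E] [NormedSpace ℝ E] [CompleteSpace E] {f : ℝ → E}

lemma norm_sub_le_integral_norm_deriv (hf : Differentiable ℝ f) (hf' : Integrable (deriv f))
    (x y : ℝ) : ‖f x - f y‖ ≤ ∫ t, ‖deriv f t‖ := by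
  rw [← intervalIntegral.integral_deriv_eq_sub (fun t _ => hf t) hf'.intervalIntegrable]
  exact intervalIntegral.norm_integral_le_integral_norm_uIoc.trans
    (setIntegral_le_integral hf'.norm (ae_of_all _ fun t => norm_nonneg _))

lemma norm_le_integral_norm_deriv (hf : Differentiable ℝ f) (hf' : Integrable (deriv f))
    (hsmall : ∀ ε > 0, ∃ y, ‖f y‖ < ε) (x : ℝ) : ‖f x‖ ≤ ∫ t, ‖deriv f t‖ := by
  refine le_of_forall_pos_le_add fun ε hε => ?_
  obtain ⟨y, hy⟩ := hsmall ε hε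
  calc ‖f x‖ ≤ ‖f x - f y‖ + ‖f y‖ := norm_le_norm_sub_add _ _
    _ ≤ (∫ t, ‖deriv f t‖) + ε := add_le_add (norm_sub_le_integral_norm_deriv hf hf' x y) hy.le

lemma norm_le_rpow_one_sub_mul_integral_norm_deriv_rpow {p C : ℝ} (hp : 0 < p) (hp1 : p ≤ 1)
    (hf : Differentiable ℝ f) (hC : ∀ x, ‖deriv f x‖ ≤ C)
    (hfp : Integrable fun x => ‖f x‖ ^ p) (hfp' : Integrable fun x => ‖deriv f x‖ ^ p) (x : ℝ) :
    ‖f x‖ ≤ C ^ (1 - p) * ∫ t, ‖deriv f t‖ ^ p := by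
  have hf' : Integrable (deriv f) := integrable_of_norm_le_of_integrable_norm_rpow hp.le hp1
    (aestronglyMeasurable_deriv f _) (ae_of_all _ hC) hfp'
  have hsmall : ∀ ε > 0, ∃ y, ‖f y‖ < ε := fun _ =>
    exists_norm_lt_of_integrable_norm_rpow Real.volume_univ hp hfp
  exact (norm_le_integral_norm_deriv hf hf' hsmall x).trans
    (integral_norm_le_rpow_one_sub_mul_integral_norm_rpow hp.le hp1 (ae_of_all _ hC) hfp')

end Deriv

section Norms

variable {p : ℝ} {f : ℝ → ℝ}

lemma supNorm_nonneg (f : ℝ → ℝ) : 0 ≤ supNorm f :=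
  Real.iSup_nonneg fun _ => abs_nonneg _

lemma abs_le_supNorm (hf : BddFun f) (x : ℝ) : |f x| ≤ supNorm f :=
  le_ciSup (hf.imp fun _ hC => forall_mem_range.2 hC) x

lemma pNorm_nonneg (p : ℝ) (f : ℝ → ℝ) : 0 ≤ pNorm p f :=
  rpow_nonneg (integral_nonneg fun _ => rpow_nonneg (abs_nonneg _) _) _

lemma pNorm_rpow_self (hp : p ≠ 0) (f : ℝ → ℝ) : pNorm p f ^ p = ∫ x, |f x| ^ p := by
  rw [pNorm, one_div, rpow_inv_rpow (integral_nonneg fun _ => rpow_nonneg (abs_nonneg _) _) hp]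

lemma abs_le_supNorm_deriv_rpow_mul_pNorm_deriv_rpow (hp : 0 < p) (hp1 : p ≤ 1)
    (hf : Differentiable ℝ f) (hbd : BddFun (deriv f)) (hLp : MemLp' p f)
    (hLp' : MemLp' p (deriv f)) (x : ℝ) :
    |f x| ≤ supNorm (deriv f) ^ (1 - p) * pNorm p (deriv f) ^ p := by
  rw [pNorm_rpow_self hp.ne']
  exact norm_le_rpow_one_sub_mul_integral_norm_deriv_rpow hp hp1 hf (abs_le_supNorm hbd) hLp hLp' x

lemma bddFun_of_bddFun_deriv (hp : 0 < p) (hp1 : p ≤ 1) (hf : Differentiable ℝ f)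
    (hbd : BddFun (deriv f)) (hLp : MemLp' p f) (hLp' : MemLp' p (deriv f)) : BddFun f :=
  ⟨_, abs_le_supNorm_deriv_rpow_mul_pNorm_deriv_rpow hp hp1 hf hbd hLp hLp'⟩

lemma supNorm_le_supNorm_deriv_rpow_mul_pNorm_deriv_rpow (hp : 0 < p) (hp1 : p ≤ 1)
    (hf : Differentiable ℝ f) (hbd : BddFun (deriv f)) (hLp : MemLp' p f)
    (hLp' : MemLp' p (deriv f)) :
    supNorm f ≤ supNorm (deriv f) ^ (1 - p) * pNorm p (deriv f) ^ p :=
  ciSup_le (abs_le_supNorm_deriv_rpow_mul_pNorm_deriv_rpow hp hp1 hf hbd hLp hLp')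

lemma supNorm_rpow_pow_le_deriv (hp : 0 < p) (hp1 : p ≤ 1) (hf : Differentiable ℝ f)
    (hbd : BddFun (deriv f)) (hLp : MemLp' p f) (hLp' : MemLp' p (deriv f)) (n : ℕ) :
    supNorm f ^ ((1 - p) ^ n) ≤
      supNorm (deriv f) ^ ((1 - p) ^ (n + 1)) * pNorm p (deriv f) ^ (p * (1 - p) ^ n) :=
  calc supNorm f ^ ((1 - p) ^ n)
      ≤ (supNorm (deriv f) ^ (1 - p) * pNorm p (deriv f) ^ p) ^ ((1 - p) ^ n) :=
        rpow_le_rpow (supNorm_nonneg f)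
          (supNorm_le_supNorm_deriv_rpow_mul_pNorm_deriv_rpow hp hp1 hf hbd hLp hLp')
          (pow_nonneg (sub_nonneg.2 hp1) n)
    _ = supNorm (deriv f) ^ ((1 - p) ^ (n + 1)) * pNorm p (deriv f) ^ (p * (1 - p) ^ n) := by
        rw [mul_rpow (rpow_nonneg (supNorm_nonneg _) _) (rpow_nonneg (pNorm_nonneg _ _) _),
          ← rpow_mul (supNorm_nonneg _), ← rpow_mul (pNorm_nonneg _ _), ← pow_succ']

end Norms

theorem sup_le_iterated_product_general {p : ℝ} (hp : 0 < p) (hp1 : p ≤ 1) {f : ℝ → ℝ} {n : ℕ}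
    (hf : ∀ k < n, Differentiable ℝ (iteratedDeriv k f)) (hbd : BddFun (iteratedDeriv n f))
    (hLp : ∀ k ≤ n, MemLp' p (iteratedDeriv k f)) :
    supNorm f ≤ supNorm (iteratedDeriv n f) ^ ((1 - p) ^ n) *
      ∏ k ∈ Finset.Icc 1 n, pNorm p (iteratedDeriv k f) ^ (p * (1 - p) ^ (k - 1)) := by
  induction n with
  | zero => simp
  | succ n ih =>
    have hdiff := hf n n.lt_succ_self
    have hLpn := hLp n n.le_succ
    have hLpsucc := hLp (n + 1) le_rfl
    rw [iteratedDeriv_succ] at hbd hLpsucc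
    have hbdn : BddFun (iteratedDeriv n f) := bddFun_of_bddFun_deriv hp hp1 hdiff hbd hLpn hLpsucc
    have hstep := supNorm_rpow_pow_le_deriv hp hp1 hdiff hbd hLpn hLpsucc n
    rw [← iteratedDeriv_succ] at hstep
    have hprod : 0 ≤ ∏ k ∈ Finset.Icc 1 n, pNorm p (iteratedDeriv k f) ^ (p * (1 - p) ^ (k - 1)) :=
      Finset.prod_nonneg fun _ _ => rpow_nonneg (pNorm_nonneg _ _) _
    calc supNorm f
        ≤ supNorm (iteratedDeriv n f) ^ ((1 - p) ^ n) *
            ∏ k ∈ Finset.Icc 1 n, pNorm p (iteratedDeriv k f) ^ (p * (1 - p) ^ (k - 1)) :=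
          ih (fun k hk => hf k (hk.trans n.lt_succ_self)) hbdn
            fun k hk => hLp k (hk.trans n.le_succ)
      _ ≤ supNorm (iteratedDeriv (n + 1) f) ^ ((1 - p) ^ (n + 1)) *
            pNorm p (iteratedDeriv (n + 1) f) ^ (p * (1 - p) ^ n) *
            ∏ k ∈ Finset.Icc 1 n, pNorm p (iteratedDeriv k f) ^ (p * (1 - p) ^ (k - 1)) :=
          mul_le_mul_of_nonneg_right hstep hprod
      _ = supNorm (iteratedDeriv (n + 1) f) ^ ((1 - p) ^ (n + 1)) *
            ∏ k ∈ Finset.Icc 1 (n + 1),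
              pNorm p (iteratedDeriv k f) ^ (p * (1 - p) ^ (k - 1)) := by
          rw [Finset.prod_Icc_succ_top n.succ_pos, Nat.add_sub_cancel]
          ring

/-- iterated estimate. If `f` is smooth with all derivatives bounded and in
`L^p`, then for `n ≥ 1`, `‖f‖_∞ ≤ ‖f^(n)‖_∞^(q^n) ∏_{k=1}^n ‖f^(k)‖_p^(p q^(k-1))`. -/
theorem sup_le_iterated_product (p q : ℝ) (hp : 0 < p) (hp1 : p < 1) (hq : q = 1 - p)
    (f : ℝ → ℝ) (hf : ContDiff ℝ (⊤ : ℕ∞) f)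
    (hbd : ∀ k, BddFun (iteratedDeriv k f)) (hLp : ∀ k, MemLp' p (iteratedDeriv k f))
    (n : ℕ) (hn : 1 ≤ n) :
    supNorm f ≤ supNorm (iteratedDeriv n f) ^ (q ^ n) *
      ∏ k ∈ Finset.Icc 1 n, pNorm p (iteratedDeriv k f) ^ (p * q ^ (k - 1)) := by
  subst hq
  exact sup_le_iterated_product_general hp hp1.le
    (fun k _ => hf.differentiable_iteratedDeriv k (mod_cast WithTop.coe_lt_top _))
    (hbd n) (fun k _ => hLp k)
end

section
/- Let c ∈ (0,1), let p ∈ (0,1), and let (a_n)_{n≥0} be a decreasing summable sequence of positive reals satisfying ∑_{j>k} a_j ≤ (1-c) a_k for all k ≥ 0. Let u be the smooth function obtained as uniform limit of u_n = H_{a_0} * ⋯ * H_{a_n}. Then for every n ≥ 0, ‖u^{(n)}‖_p ≤ (2-c)^{1/p} · 2^{n/p} · a_n^{1/p} / (a_0 a_1 ⋯ a_n); equivalently, ∫_ℝ |u^{(n)}|^p dx ≤ (2-c) · 2^n a_n / (a_0 a_1 ⋯ a_n)^p. -/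
open Real MeasureTheory Filter Set

/-- `H_a = (1/a) · χ_{[0,a]}`. -/
noncomputable def Hfun (a : ℝ) : ℝ → ℝ := Set.indicator (Set.Icc 0 a) fun _ => 1 / a

/-- Convolution of real functions on `ℝ`. -/
noncomputable def convFun (f g : ℝ → ℝ) : ℝ → ℝ := fun x => ∫ t : ℝ, f t * g (x - t)

/-- `u_n = H_{a_0} * H_{a_1} * ⋯ * H_{a_n}`. -/
noncomputable def uSeq (a : ℕ → ℝ) : ℕ → ℝ → ℝ
  | 0 => Hfun (a 0)
  | n + 1 => convFun (uSeq a n) (Hfun (a (n + 1)))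

/-- The separation condition `∑_{j>k} a_j ≤ (1-c) a_k` for all `k`. -/
def SepCond (c : ℝ) (a : ℕ → ℝ) : Prop := ∀ k : ℕ, ∑' j : ℕ, a (k + 1 + j) ≤ (1 - c) * a k

/-!
Convolution with `H_b` is averaging over `[x - b, x]`, so pulling the first factor out of the limit
gives `u = H_{a_0} * v`, where `v` is the limit built from the shifted sequence `a_1, a_2, …`, and
hence `u'(x) = (v x - v (x - a_0)) / a_0`. Since `|s - t|^p ≤ |s|^p + |t|^p` for `p ≤ 1`, each
derivative trades a factor `2 / a_0^p` for a shift of the sequence. After `n` steps it remains to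
bound `∫ |w|^p` for the limit `w` built from `a_n, a_{n+1}, …`, which is at most `1 / a_n` in absolute
value and lives on an interval of length `a_n + a_{n+1} + ⋯`.
-/

open scoped Topology NNReal

section IntegralRpow

variable {G E : Type*} [MeasurableSpace G] {μ : Measure G} [NormedAddCommGroup E]

theorem integral_norm_rpow_le_of_forall_notMem_eq_zero {f : G → E} {s : Set G} {C p : ℝ}
    (hp : 0 < p) (hs : μ s < ⊤) (hC : ∀ x ∈ s, ‖f x‖ ≤ C) (hf : ∀ x ∉ s, f x = 0) :
    ∫ x, ‖f x‖ ^ p ∂μ ≤ C ^ p * μ.real s := by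
  have hzero : ∀ x ∉ s, ‖f x‖ ^ p = 0 := fun x hx => by
    rw [hf x hx, norm_zero, zero_rpow hp.ne']
  rw [← setIntegral_eq_integral_of_forall_compl_eq_zero hzero]
  refine (le_norm_self _).trans (norm_setIntegral_le_of_norm_le_const hs fun x hx => ?_)
  rw [norm_of_nonneg (by positivity)]
  exact rpow_le_rpow (norm_nonneg _) (hC x hx) hp.le

theorem integral_norm_sub_comp_sub_rpow_le [AddGroup G] [MeasurableAdd G]
    [μ.IsAddRightInvariant] {f : G → E} {p : ℝ} (hp₀ : 0 ≤ p) (hp₁ : p ≤ 1)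
    (hf : Integrable (fun x => ‖f x‖ ^ p) μ) (b : G) :
    ∫ x, ‖f x - f (x - b)‖ ^ p ∂μ ≤ 2 * ∫ x, ‖f x‖ ^ p ∂μ := by
  have hf' : Integrable (fun x => ‖f (x - b)‖ ^ p) μ := hf.comp_sub_right b
  calc ∫ x, ‖f x - f (x - b)‖ ^ p ∂μ
      ≤ ∫ x, (‖f x‖ ^ p + ‖f (x - b)‖ ^ p) ∂μ := by
        refine integral_mono_of_nonneg (.of_forall fun x => by positivity) (hf.add hf')
          (.of_forall fun x => ?_)
        exact (rpow_le_rpow (norm_nonneg _) (norm_sub_le _ _) hp₀).trans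
          (rpow_add_le_add_rpow (norm_nonneg _) (norm_nonneg _) hp₀ hp₁)
    _ = 2 * ∫ x, ‖f x‖ ^ p ∂μ := by
        rw [integral_add hf hf', integral_sub_right_eq_self fun x => ‖f x‖ ^ p, two_mul]

end IntegralRpow

theorem intervalIntegrable_of_norm_le {E : Type*} [NormedAddCommGroup E] {f : ℝ → E} {C : ℝ}
    (hf : StronglyMeasurable f) (hC : ∀ x, ‖f x‖ ≤ C) (s t : ℝ) :
    IntervalIntegrable f volume s t :=
  (intervalIntegrable_const (c := C)).mono_fun' hf.aestronglyMeasurable (.of_forall hC)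

theorem hasCompactSupport_iteratedDeriv {𝕜 F : Type*} [NontriviallyNormedField 𝕜]
    [NormedAddCommGroup F] [NormedSpace 𝕜 F] {f : 𝕜 → F} (hf : HasCompactSupport f) (n : ℕ) :
    HasCompactSupport (iteratedDeriv n f) := by
  induction n with
  | zero => rwa [iteratedDeriv_zero]
  | succ n ih => exact iteratedDeriv_succ (f := f) (n := n) ▸ ih.deriv

/-- The mean of `f` over `[x - b, x]`, that is `H_b * f`. It is written as an integral over the
fixed interval `[0, b]`, which makes it visibly commute with translations. -/
noncomputable def movingAverage {E : Type*} [NormedAddCommGroup E] [NormedSpace ℝ E]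
    (b : ℝ) (f : ℝ → E) (x : ℝ) : E :=
  b⁻¹ • ∫ s in (0 : ℝ)..b, f (x - s)

section MovingAverage

variable {E : Type*} [NormedAddCommGroup E] [NormedSpace ℝ E] {f g : ℝ → E} {b x : ℝ}

theorem movingAverage_eq_smul_integral (b : ℝ) (f : ℝ → E) (x : ℝ) :
    movingAverage b f x = b⁻¹ • ∫ t in (x - b)..x, f t := by
  rw [movingAverage, intervalIntegral.integral_comp_sub_left f x, sub_zero]

theorem movingAverage_sub (hf : Continuous f) (hg : Continuous g) (b x : ℝ) :
    movingAverage b (fun y => f y - g y) x = movingAverage b f x - movingAverage b g x := by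
  simp only [movingAverage]
  rw [← smul_sub, intervalIntegral.integral_sub]
  all_goals exact Continuous.intervalIntegrable (by fun_prop) _ _

theorem movingAverage_comp_add (b : ℝ) (f : ℝ → E) (h x : ℝ) :
    movingAverage b (fun y => f (y + h)) x = movingAverage b f (x + h) := by
  simp only [movingAverage, sub_add_eq_add_sub]

theorem movingAverage_const [CompleteSpace E] (hb : b ≠ 0) (e : E) (x : ℝ) :
    movingAverage b (fun _ => e) x = e := by
  rw [movingAverage, intervalIntegral.integral_const, sub_zero, inv_smul_smul₀ hb]

theorem norm_movingAverage_le {C : ℝ} (hb : 0 < b) (hC : ∀ s ∈ Ioc 0 b, ‖f (x - s)‖ ≤ C) :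
    ‖movingAverage b f x‖ ≤ C := by
  have hint : ‖∫ s in (0 : ℝ)..b, f (x - s)‖ ≤ C * b := by
    have h := intervalIntegral.norm_integral_le_of_norm_le_const (uIoc_of_le hb.le ▸ hC)
    rwa [sub_zero, abs_of_pos hb] at h
  rw [movingAverage, norm_smul, norm_inv, norm_of_nonneg hb.le, inv_mul_le_iff₀ hb]
  linarith

theorem lipschitzWith_movingAverage_of_norm_le {C : ℝ} (hb : 0 ≤ b) (hf : StronglyMeasurable f)
    (hC : ∀ x, ‖f x‖ ≤ C) : LipschitzWith (b⁻¹ * (2 * C)).toNNReal (movingAverage b f) := by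
  have hint := intervalIntegrable_of_norm_le hf hC
  refine LipschitzWith.of_dist_le' fun x y => ?_
  have hleft := intervalIntegral.norm_integral_le_of_norm_le_const
    (a := x - b) (b := y - b) fun s _ => hC s
  have hright := intervalIntegral.norm_integral_le_of_norm_le_const
    (a := x) (b := y) fun s _ => hC s
  rw [sub_sub_sub_cancel_right] at hleft
  rw [dist_eq_norm, dist_comm, Real.dist_eq, movingAverage_eq_smul_integral,
    movingAverage_eq_smul_integral, ← smul_sub, intervalIntegral.integral_interval_sub_interval_comm
      (hint _ _) (hint _ _) (hint _ _), norm_smul, norm_inv, norm_of_nonneg hb, mul_assoc]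
  gcongr
  exact (norm_sub_le _ _).trans (by linarith)

theorem lipschitzWith_movingAverage {K : ℝ≥0} (hb : 0 < b) (hf : LipschitzWith K f) :
    LipschitzWith K (movingAverage b f) := by
  have hcont : Continuous f := hf.continuous
  refine LipschitzWith.of_dist_le_mul fun x y => ?_
  have hshift : movingAverage b f y = movingAverage b (fun z => f (z + (y - x))) x := by
    rw [movingAverage_comp_add, add_sub_cancel]
  rw [dist_eq_norm, hshift, ← movingAverage_sub hcont (by fun_prop)]
  refine norm_movingAverage_le hb fun s _ => ?_
  simpa [dist_eq_norm, abs_sub_comm] using hf.dist_le_mul (x - s) (x - s + (y - x))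

theorem dist_movingAverage_le [CompleteSpace E] {K : ℝ≥0} (hb : 0 < b) (hf : LipschitzWith K f)
    (x : ℝ) : dist (movingAverage b f x) (f x) ≤ K * b := by
  rw [dist_eq_norm, ← movingAverage_const hb.ne' (f x) x,
    ← movingAverage_sub hf.continuous continuous_const]
  refine norm_movingAverage_le hb fun s hs => ?_
  calc ‖f (x - s) - f x‖ ≤ K * |s| := by simpa [dist_eq_norm] using hf.dist_le_mul (x - s) x
    _ ≤ K * b := by rw [abs_of_pos hs.1]; gcongr; exact hs.2

theorem movingAverage_comm {C : ℝ} (b d : ℝ) (hf : StronglyMeasurable f) (hC : ∀ x, ‖f x‖ ≤ C) :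
    movingAverage b (movingAverage d f) = movingAverage d (movingAverage b f) := by
  funext x
  have hint : Integrable (Function.uncurry fun s t => f (x - s - t))
      ((volume.restrict (uIoc 0 b)).prod (volume.restrict (uIoc 0 d))) := by
    have : IsFiniteMeasure ((volume.restrict (uIoc 0 b)).prod (volume.restrict (uIoc 0 d))) := by
      unfold uIoc; infer_instance
    have hmeas : StronglyMeasurable (Function.uncurry fun s t : ℝ => f (x - s - t)) :=
      hf.comp_measurable (by fun_prop)
    exact .of_bound hmeas.aestronglyMeasurable C (.of_forall fun z => hC _)
  rw [Measure.prod_restrict, ← Measure.volume_eq_prod] at hint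
  simp only [movingAverage, intervalIntegral.integral_smul]
  rw [intervalIntegral_intervalIntegral_swap hint, smul_comm]
  simp only [sub_right_comm]

theorem support_movingAverage_subset {l r : ℝ} (hb : 0 ≤ b) (hf : f.support ⊆ Icc l r) :
    (movingAverage b f).support ⊆ Icc l (r + b) := by
  refine Function.support_subset_iff'.2 fun x hx => ?_
  have hzero : EqOn (fun s => f (x - s)) 0 (uIcc 0 b) := fun s hs => by
    rw [uIcc_of_le hb] at hs
    refine Function.support_subset_iff'.1 hf _ fun h => hx ⟨?_, ?_⟩
    · linarith [h.1, hs.1]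
    · linarith [h.2, hs.2]
  rw [movingAverage, intervalIntegral.integral_congr hzero]
  simp

variable [CompleteSpace E]

theorem hasDerivAt_movingAverage (b : ℝ) (hf : Continuous f) (x : ℝ) :
    HasDerivAt (movingAverage b f) (b⁻¹ • (f x - f (x - b))) x := by
  have hprim : ∀ y, HasDerivAt (fun z => ∫ t in (0 : ℝ)..z, f t) (f y) y := fun y =>
    intervalIntegral.integral_hasDerivAt_right (hf.intervalIntegrable 0 y)
      hf.aestronglyMeasurable.stronglyMeasurableAtFilter hf.continuousAt
  have heq : movingAverage b f =
      fun y => b⁻¹ • ((∫ t in (0 : ℝ)..y, f t) - ∫ t in (0 : ℝ)..(y - b), f t) := by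
    funext y
    rw [movingAverage_eq_smul_integral, intervalIntegral.integral_interval_sub_left
      (hf.intervalIntegrable _ _) (hf.intervalIntegrable _ _)]
  rw [heq]
  exact ((hprim x).sub ((hprim (x - b)).comp_sub_const x b)).const_smul _

theorem deriv_movingAverage (b : ℝ) (hf : Continuous f) :
    deriv (movingAverage b f) = fun x => b⁻¹ • (f x - f (x - b)) :=
  funext fun x => (hasDerivAt_movingAverage b hf x).deriv

theorem contDiff_movingAverage {n : ℕ} (b : ℝ) (hf : ContDiff ℝ n f) :
    ContDiff ℝ (n + 1) (movingAverage b f) := by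
  refine contDiff_succ_iff_deriv.2
    ⟨fun x => (hasDerivAt_movingAverage b hf.continuous x).differentiableAt, by simp, ?_⟩
  rw [deriv_movingAverage b hf.continuous]
  fun_prop

theorem iteratedDeriv_succ_movingAverage {n : ℕ} (b : ℝ) (hf : ContDiff ℝ n f) (x : ℝ) :
    iteratedDeriv (n + 1) (movingAverage b f) x =
      b⁻¹ • (iteratedDeriv n f x - iteratedDeriv n f (x - b)) := by
  have hshift : ContDiff ℝ n fun y => f (y - b) := by fun_prop
  rw [iteratedDeriv_succ', deriv_movingAverage b hf.continuous,
    iteratedDeriv_fun_const_smul_field, iteratedDeriv_fun_sub hf.contDiffAt hshift.contDiffAt,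
    iteratedDeriv_comp_sub_const]

end MovingAverage

section Hfun

variable {b : ℝ}

theorem convFun_comm (f g : ℝ → ℝ) : convFun f g = convFun g f := by
  funext x
  simp only [convFun]
  rw [← integral_sub_left_eq_self (fun t => f t * g (x - t)) volume x]
  simp only [sub_sub_cancel, mul_comm]

theorem convFun_Hfun (hb : 0 ≤ b) (f : ℝ → ℝ) : convFun f (Hfun b) = movingAverage b f := by
  funext x
  have hind : ∀ t, Hfun b t * f (x - t) = (Icc 0 b).indicator (fun s => 1 / b * f (x - s)) t :=
    fun t => (indicator_mul_left _ _ fun s => f (x - s)).symm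
  rw [convFun_comm]
  simp only [convFun, hind]
  rw [integral_indicator measurableSet_Icc, movingAverage, integral_const_mul,
    intervalIntegral.integral_of_le hb, integral_Icc_eq_integral_Ioc, one_div, smul_eq_mul]

theorem movingAverage_Hfun_comm {d : ℝ} (hb : 0 ≤ b) (hd : 0 ≤ d) :
    movingAverage b (Hfun d) = movingAverage d (Hfun b) := by
  rw [← convFun_Hfun hb, ← convFun_Hfun hd, convFun_comm]

theorem measurable_Hfun (b : ℝ) : Measurable (Hfun b) :=
  measurable_const.indicator measurableSet_Icc

theorem norm_Hfun_le (hb : 0 ≤ b) (x : ℝ) : ‖Hfun b x‖ ≤ b⁻¹ := by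
  refine (norm_indicator_le_norm_self _ x).trans ?_
  rw [one_div, norm_of_nonneg (inv_nonneg.2 hb)]

theorem support_Hfun_subset (b : ℝ) : (Hfun b).support ⊆ Icc 0 b :=
  support_indicator_subset

end Hfun

section USeq

variable {a : ℕ → ℝ}

theorem uSeq_succ (ha : ∀ n, 0 < a n) (n : ℕ) :
    uSeq a (n + 1) = movingAverage (a (n + 1)) (uSeq a n) :=
  convFun_Hfun (ha _).le _

theorem norm_uSeq_le (ha : ∀ n, 0 < a n) (n : ℕ) (x : ℝ) : ‖uSeq a n x‖ ≤ (a 0)⁻¹ := by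
  induction n generalizing x with
  | zero => exact norm_Hfun_le (ha 0).le x
  | succ n ih => exact uSeq_succ ha n ▸ norm_movingAverage_le (ha _) fun s _ => ih _

theorem measurable_uSeq (ha : ∀ n, 0 < a n) (n : ℕ) : Measurable (uSeq a n) := by
  induction n with
  | zero => exact measurable_Hfun _
  | succ n ih =>
    rw [uSeq_succ ha]
    exact (lipschitzWith_movingAverage_of_norm_le (ha _).le ih.stronglyMeasurable
      (norm_uSeq_le ha n)).continuous.measurable

theorem exists_lipschitzWith_uSeq_succ (ha : ∀ n, 0 < a n) :
    ∃ K, ∀ n, LipschitzWith K (uSeq a (n + 1)) := by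
  refine ⟨((a 1)⁻¹ * (2 * (a 0)⁻¹)).toNNReal, fun n => ?_⟩
  induction n with
  | zero =>
    rw [uSeq_succ ha]
    exact lipschitzWith_movingAverage_of_norm_le (ha _).le
      (measurable_uSeq ha 0).stronglyMeasurable (norm_uSeq_le ha 0)
  | succ n ih => exact uSeq_succ ha (n + 1) ▸ lipschitzWith_movingAverage (ha _) ih

theorem support_uSeq_subset (ha : ∀ n, 0 < a n) (n : ℕ) :
    (uSeq a n).support ⊆ Icc 0 (∑ i ∈ Finset.range (n + 1), a i) := by
  induction n with
  | zero =>
    rw [zero_add, Finset.sum_range_one]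
    exact support_Hfun_subset (a 0)
  | succ n ih =>
    rw [uSeq_succ ha, Finset.sum_range_succ]
    exact support_movingAverage_subset (ha _).le ih

theorem uSeq_succ_eq_movingAverage_uSeq_shift (ha : ∀ n, 0 < a n) (n : ℕ) :
    uSeq a (n + 1) = movingAverage (a 0) (uSeq (fun k => a (k + 1)) n) := by
  induction n with
  | zero => exact (uSeq_succ ha 0).trans (movingAverage_Hfun_comm (ha 1).le (ha 0).le)
  | succ n ih =>
    have ha' : ∀ k, 0 < a (k + 1) := fun k => ha _
    rw [uSeq_succ ha, ih, uSeq_succ ha', movingAverage_comm _ _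
      (measurable_uSeq ha' n).stronglyMeasurable (norm_uSeq_le ha' n)]

theorem exists_tendsto_uSeq (ha : ∀ n, 0 < a n) (hsum : Summable a) :
    ∃ u, Tendsto (uSeq a) atTop (𝓝 u) := by
  obtain ⟨K, hK⟩ := exists_lipschitzWith_uSeq_succ ha
  have hlim : ∀ x, ∃ l, Tendsto (fun n => uSeq a (n + 1) x) atTop (𝓝 l) := fun x => by
    refine cauchySeq_tendsto_of_complete (cauchySeq_of_dist_le_of_summable
      (fun n => K * a (n + 2)) (fun n => ?_) (((summable_nat_add_iff 2).2 hsum).mul_left _))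
    rw [dist_comm, Nat.succ_eq_add_one, uSeq_succ ha (n + 1)]
    exact dist_movingAverage_le (ha _) (hK n) x
  choose u hu using hlim
  exact ⟨u, tendsto_pi_nhds.2 fun x => (tendsto_add_atTop_iff_nat 1).1 (hu x)⟩

end USeq

/-- The infinite convolution `H_{a_0} * H_{a_1} * ⋯`, taken as the pointwise limit of `uSeq a`; it
is a junk value unless that limit exists. -/
noncomputable def infiniteConvolution (a : ℕ → ℝ) : ℝ → ℝ := limUnder atTop (uSeq a)

section InfiniteConvolution

variable {a : ℕ → ℝ}

theorem tendsto_uSeq_infiniteConvolution (ha : ∀ n, 0 < a n) (hsum : Summable a) (x : ℝ) :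
    Tendsto (fun n => uSeq a n x) atTop (𝓝 (infiniteConvolution a x)) :=
  tendsto_pi_nhds.1 (tendsto_nhds_limUnder (exists_tendsto_uSeq ha hsum)) x

theorem measurable_infiniteConvolution (ha : ∀ n, 0 < a n) (hsum : Summable a) :
    Measurable (infiniteConvolution a) :=
  measurable_of_tendsto_metrizable (measurable_uSeq ha)
    (tendsto_pi_nhds.2 (tendsto_uSeq_infiniteConvolution ha hsum))

theorem norm_infiniteConvolution_le (ha : ∀ n, 0 < a n) (hsum : Summable a) (x : ℝ) :
    ‖infiniteConvolution a x‖ ≤ (a 0)⁻¹ :=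
  le_of_tendsto (tendsto_uSeq_infiniteConvolution ha hsum x).norm
    (.of_forall fun n => norm_uSeq_le ha n x)

theorem support_infiniteConvolution_subset (ha : ∀ n, 0 < a n) (hsum : Summable a) :
    (infiniteConvolution a).support ⊆ Icc 0 (∑' i, a i) := by
  refine Function.support_subset_iff'.2 fun x hx => ?_
  have hzero : ∀ n, uSeq a n x = 0 := fun n =>
    Function.support_subset_iff'.1 (support_uSeq_subset ha n) x fun h =>
      hx ⟨h.1, h.2.trans (hsum.sum_le_tsum _ fun i _ => (ha i).le)⟩
  exact tendsto_nhds_unique (tendsto_uSeq_infiniteConvolution ha hsum x)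
    (tendsto_const_nhds.congr fun n => (hzero n).symm)

theorem infiniteConvolution_eq_movingAverage (ha : ∀ n, 0 < a n) (hsum : Summable a) :
    infiniteConvolution a =
      movingAverage (a 0) (infiniteConvolution fun k => a (k + 1)) := by
  have ha' : ∀ k, 0 < a (k + 1) := fun k => ha _
  have hsum' : Summable fun k => a (k + 1) := (summable_nat_add_iff 1).2 hsum
  funext x
  refine tendsto_nhds_unique
    ((tendsto_add_atTop_iff_nat 1).2 (tendsto_uSeq_infiniteConvolution ha hsum x)) ?_
  simp only [uSeq_succ_eq_movingAverage_uSeq_shift ha]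
  refine Tendsto.const_smul ?_ (a 0)⁻¹
  refine intervalIntegral.tendsto_integral_filter_of_dominated_convergence
    (fun _ => (a 1)⁻¹) (.of_forall fun n => ?_)
    (.of_forall fun n => .of_forall fun s _ => norm_uSeq_le ha' n _) intervalIntegrable_const
    (.of_forall fun s _ => tendsto_uSeq_infiniteConvolution ha' hsum' _)
  exact ((measurable_uSeq ha' n).comp (by fun_prop)).aestronglyMeasurable

theorem continuous_infiniteConvolution (ha : ∀ n, 0 < a n) (hsum : Summable a) :
    Continuous (infiniteConvolution a) := by
  have ha' : ∀ k, 0 < a (k + 1) := fun k => ha _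
  have hsum' : Summable fun k => a (k + 1) := (summable_nat_add_iff 1).2 hsum
  rw [infiniteConvolution_eq_movingAverage ha hsum]
  exact (lipschitzWith_movingAverage_of_norm_le (ha 0).le
    (measurable_infiniteConvolution ha' hsum').stronglyMeasurable
    (norm_infiniteConvolution_le ha' hsum')).continuous

theorem contDiff_infiniteConvolution (ha : ∀ n, 0 < a n) (hsum : Summable a) (n : ℕ) :
    ContDiff ℝ n (infiniteConvolution a) := by
  induction n generalizing a with
  | zero => exact contDiff_zero.2 (continuous_infiniteConvolution ha hsum)
  | succ n ih =>
    rw [infiniteConvolution_eq_movingAverage ha hsum]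
    exact_mod_cast contDiff_movingAverage _ (ih (fun k => ha _) ((summable_nat_add_iff 1).2 hsum))

variable {p : ℝ}

theorem integrable_norm_iteratedDeriv_infiniteConvolution_rpow (ha : ∀ n, 0 < a n)
    (hsum : Summable a) (hp : 0 < p) (n : ℕ) :
    Integrable fun x => ‖iteratedDeriv n (infiniteConvolution a) x‖ ^ p := by
  have hcont : Continuous (iteratedDeriv n (infiniteConvolution a)) :=
    (contDiff_infiniteConvolution ha hsum n).continuous_iteratedDeriv n le_rfl
  have hsupp : HasCompactSupport (iteratedDeriv n (infiniteConvolution a)) :=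
    hasCompactSupport_iteratedDeriv (.of_support_subset_isCompact isCompact_Icc
      (support_infiniteConvolution_subset ha hsum)) n
  exact (hcont.norm.rpow_const fun _ => .inr hp.le).integrable_of_hasCompactSupport
    (hsupp.comp_left (g := fun y => ‖y‖ ^ p) (by rw [norm_zero, zero_rpow hp.ne']))

theorem integral_norm_infiniteConvolution_rpow_le (ha : ∀ n, 0 < a n) (hsum : Summable a)
    (hp : 0 < p) : ∫ x, ‖infiniteConvolution a x‖ ^ p ≤ (∑' i, a i) / a 0 ^ p := by
  have hbound := integral_norm_rpow_le_of_forall_notMem_eq_zero (μ := volume) hp measure_Icc_lt_top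
    (fun x _ => norm_infiniteConvolution_le ha hsum x)
    (Function.support_subset_iff'.1 (support_infiniteConvolution_subset ha hsum))
  rwa [volume_real_Icc_of_le (tsum_nonneg fun i => (ha i).le), sub_zero, inv_rpow (ha 0).le,
    inv_mul_eq_div] at hbound

theorem integral_norm_iteratedDeriv_succ_infiniteConvolution_rpow_le (ha : ∀ n, 0 < a n)
    (hsum : Summable a) (hp : p ∈ Ioc 0 1) (n : ℕ) :
    ∫ x, ‖iteratedDeriv (n + 1) (infiniteConvolution a) x‖ ^ p ≤
      2 / a 0 ^ p * ∫ x, ‖iteratedDeriv n (infiniteConvolution fun k => a (k + 1)) x‖ ^ p := by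
  have ha' : ∀ k, 0 < a (k + 1) := fun k => ha _
  have hsum' : Summable fun k => a (k + 1) := (summable_nat_add_iff 1).2 hsum
  set v := infiniteConvolution fun k => a (k + 1)
  have hderiv : ∀ x, ‖iteratedDeriv (n + 1) (infiniteConvolution a) x‖ ^ p =
      (a 0 ^ p)⁻¹ * ‖iteratedDeriv n v x - iteratedDeriv n v (x - a 0)‖ ^ p := fun x => by
    rw [infiniteConvolution_eq_movingAverage ha hsum, iteratedDeriv_succ_movingAverage _
      (contDiff_infiniteConvolution ha' hsum' n), norm_smul, norm_inv, norm_of_nonneg (ha 0).le,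
      mul_rpow (inv_nonneg.2 (ha 0).le) (norm_nonneg _), inv_rpow (ha 0).le]
  have hdiff := integral_norm_sub_comp_sub_rpow_le hp.1.le hp.2
    (integrable_norm_iteratedDeriv_infiniteConvolution_rpow ha' hsum' hp.1 n) (a 0)
  have hpos : 0 < a 0 ^ p := rpow_pos_of_pos (ha 0) p
  simp only [hderiv, integral_const_mul]
  rw [div_mul_eq_mul_div, ← inv_mul_eq_div]
  gcongr

theorem integral_norm_iteratedDeriv_infiniteConvolution_rpow_le (ha : ∀ n, 0 < a n)
    (hsum : Summable a) (hp : p ∈ Ioc 0 1) (n : ℕ) :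
    ∫ x, ‖iteratedDeriv n (infiniteConvolution a) x‖ ^ p ≤
      2 ^ n * (∑' j, a (n + j)) / (∏ i ∈ Finset.range (n + 1), a i) ^ p := by
  induction n generalizing a with
  | zero => simpa using integral_norm_infiniteConvolution_rpow_le ha hsum hp.1
  | succ n ih =>
    have hpos : 0 < a 0 ^ p := rpow_pos_of_pos (ha 0) p
    calc ∫ x, ‖iteratedDeriv (n + 1) (infiniteConvolution a) x‖ ^ p
        ≤ 2 / a 0 ^ p * ∫ x, ‖iteratedDeriv n (infiniteConvolution fun k => a (k + 1)) x‖ ^ p :=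
          integral_norm_iteratedDeriv_succ_infiniteConvolution_rpow_le ha hsum hp n
      _ ≤ 2 / a 0 ^ p * (2 ^ n * (∑' j, a (n + j + 1)) /
            (∏ i ∈ Finset.range (n + 1), a (i + 1)) ^ p) := by
          gcongr
          exact ih (fun k => ha _) ((summable_nat_add_iff 1).2 hsum)
      _ = 2 ^ (n + 1) * (∑' j, a (n + 1 + j)) / (∏ i ∈ Finset.range (n + 2), a i) ^ p := by
          rw [Finset.prod_range_succ' a,
            mul_rpow (Finset.prod_nonneg fun i _ => (ha _).le) (ha 0).le]
          simp only [add_right_comm n _ 1]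
          ring

end InfiniteConvolution

theorem SepCond.tsum_le {c : ℝ} {a : ℕ → ℝ} (hsep : SepCond c a) (hsum : Summable a) (k : ℕ) :
    ∑' j, a (k + j) ≤ (2 - c) * a k := by
  have hsum' : Summable fun j => a (k + j) := by
    simpa only [add_comm k] using (summable_nat_add_iff k).2 hsum
  have hk := hsep k
  rw [hsum'.tsum_eq_zero_add]
  simp only [add_zero, ← add_assoc, add_right_comm k _ 1]
  linarith

theorem pNorm_iteratedDeriv_of_infinite_convolution_general {p : ℝ} (hp : p ∈ Ioc 0 1)
    {a : ℕ → ℝ} (ha : ∀ n, 0 < a n) (hsum : Summable a) {u : ℝ → ℝ}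
    (hu : Tendsto (uSeq a) atTop (𝓝 u)) (n : ℕ) :
    ∫ x, |iteratedDeriv n u x| ^ p ≤
      2 ^ n * (∑' j, a (n + j)) / (∏ i ∈ Finset.range (n + 1), a i) ^ p :=
  hu.limUnder_eq ▸ integral_norm_iteratedDeriv_infiniteConvolution_rpow_le ha hsum hp n

/-- If `u` is the uniform limit of the `u_n` (a smooth function), then
`∫ |u^(n)|^p ≤ (2-c) · 2^n a_n / (a_0 ⋯ a_n)^p` for every `n`. -/
theorem pNorm_iteratedDeriv_of_infinite_convolution (c p : ℝ) (hc : c ∈ Set.Ioo (0:ℝ) 1)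
    (hp : p ∈ Set.Ioo (0:ℝ) 1)
    (a : ℕ → ℝ) (ha : ∀ n, 0 < a n) (hmono : Antitone a) (hsum : Summable a)
    (hsep : SepCond c a)
    (u : ℝ → ℝ) (hu : TendstoUniformly (fun n => uSeq a n) u Filter.atTop)
    (husmooth : ContDiff ℝ (⊤ : ℕ∞) u) (n : ℕ) :
    ∫ x : ℝ, |iteratedDeriv n u x| ^ p ≤
      (2 - c) * 2 ^ n * a n / (∏ i ∈ Finset.range (n + 1), a i) ^ p := by
  have hprod : 0 < ∏ i ∈ Finset.range (n + 1), a i := Finset.prod_pos fun i _ => ha i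
  have hlim : Tendsto (uSeq a) atTop (𝓝 u) := tendsto_pi_nhds.2 hu.tendsto_at
  refine (pNorm_iteratedDeriv_of_infinite_convolution_general
    ⟨hp.1, hp.2.le⟩ ha hsum hlim n).trans ?_
  rw [mul_comm (2 - c), mul_assoc]
  gcongr
  exact hsep.tsum_le hsum n
end
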